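/- arXiv:math/0401395 — 3 statements merged into one kernel-verified Lean document; each statement's English description precedes it below -/
import Mathlib

section
/- The linear map 𝒜 : H → E × F, 𝒜u = (Au, Tu), is Fredholm if and only if the induced map A_T : ker T → E is Fredholm and the image of T has finite codimension in F (i.e. the quotient F/im T is finite-dimensional). -/
/-- A linear map between vector spaces over `K` is Fredholm if its kernel is
finite-dimensional and its image has finite codimension. -/
def IsFredholm (K : Type*) [Field K] {V W : Type*} [AddCommGroup V] [Module K V]
    [AddCommGroup W] [Module K W] (f : V →ₗ[K] W) : Prop :=
  FiniteDimensional K (LinearMap.ker f) ∧ FiniteDimensional K (W ⧸ LinearMap.range f)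

/-!
The kernels of `𝒜 = A.prod T` and of `A_T` are the same subspace of `H`. The image of `𝒜` meets `E`
in `im A_T` and projects onto `im T`, so `0 → E → E × F → F → 0` descends to an exact sequence of
cokernels `0 → E / im A_T → (E × F) / im 𝒜 → F / im T → 0`.
-/

section Semiring

open LinearMap Submodule

variable {R M N P : Type*} [Semiring R] [AddCommMonoid M] [Module R M]
  [AddCommMonoid N] [Module R N] [AddCommMonoid P] [Module R P]

theorem map_subtype_ker_domRestrict_ker (f : M →ₗ[R] N) (g : M →ₗ[R] P) :
    (ker (f.domRestrict (ker g))).map (ker g).subtype = ker (f.prod g) := by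
  rw [ker_domRestrict, map_comap_subtype, ker_prod, inf_comm]

theorem finite_ker_prod_iff (f : M →ₗ[R] N) (g : M →ₗ[R] P) :
    Module.Finite R (ker (f.prod g)) ↔ Module.Finite R (ker (f.domRestrict (ker g))) := by
  rw [← map_subtype_ker_domRestrict_ker]
  exact (Module.Finite.equiv_iff (equivSubtypeMap _ _)).symm

theorem comap_inl_range_prod (f : M →ₗ[R] N) (g : M →ₗ[R] P) :
    (range (f.prod g)).comap (inl R N P) = range (f.domRestrict (ker g)) := by
  ext x
  simp [Prod.ext_iff, and_comm]

theorem map_snd_range_prod (f : M →ₗ[R] N) (g : M →ₗ[R] P) :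
    (range (f.prod g)).map (snd R N P) = range g := by
  rw [← range_comp, snd_prod]

end Semiring

section Ring

open LinearMap Submodule

variable {R M N P : Type*} [Ring R] [AddCommGroup M] [Module R M]
  [AddCommGroup N] [Module R N] [AddCommGroup P] [Module R P]

theorem mapQ_comap_injective (f : M →ₗ[R] N) (p : Submodule R N) :
    Function.Injective ((p.comap f).mapQ p f le_rfl) := by
  rw [← ker_eq_bot, ker_mapQ, mkQ_map_self]

theorem mapQ_surjective {g : N →ₗ[R] P} (hg : Function.Surjective g) {p : Submodule R N}
    {q : Submodule R P} (hpq : p ≤ q.comap g) : Function.Surjective (p.mapQ q g hpq) := by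
  rw [← range_eq_top, range_mapQ, range_eq_top.mpr hg, Submodule.map_top, range_mkQ]

theorem cofg_iff_comap_map_of_exact [IsNoetherianRing R] {f : M →ₗ[R] N} {g : N →ₗ[R] P}
    (hfg : Function.Exact f g) (hg : Function.Surjective g) (p : Submodule R N) :
    p.CoFG ↔ (p.comap f).CoFG ∧ (p.map g).CoFG := by
  have quotient_surjective := mapQ_surjective hg (p.le_comap_map g)
  have quotient_exact : Function.Exact ((p.comap f).mapQ p f le_rfl)
      (p.mapQ (p.map g) g (p.le_comap_map g)) :=
    (hfg.exact_mapQ_iff _ _).mpr inf_le_right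
  constructor
  · intro _
    exact ⟨.of_injective _ (mapQ_comap_injective f p), .of_surjective _ quotient_surjective⟩
  · rintro ⟨_, _⟩
    exact .of_exact quotient_exact quotient_surjective

theorem cofg_range_prod_iff [IsNoetherianRing R] (f : M →ₗ[R] N) (g : M →ₗ[R] P) :
    (range (f.prod g)).CoFG ↔ (range (f.domRestrict (ker g))).CoFG ∧ (range g).CoFG := by
  rw [cofg_iff_comap_map_of_exact .inl_snd snd_surjective, comap_inl_range_prod,
    map_snd_range_prod]

theorem isFredholm_prod_iff_general [IsNoetherianRing R] (f : M →ₗ[R] N) (g : M →ₗ[R] P) :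
    (Module.Finite R (ker (f.prod g)) ∧ (range (f.prod g)).CoFG) ↔
      (Module.Finite R (ker (f.domRestrict (ker g))) ∧ (range (f.domRestrict (ker g))).CoFG) ∧
        (range g).CoFG := by
  rw [finite_ker_prod_iff, cofg_range_prod_iff, and_assoc]

end Ring

/-- 𝒜 : H → E × F, 𝒜u = (Au, Tu), is Fredholm if and only if the induced
map A_T : ker T → E is Fredholm and the image of T has finite codimension in F. -/
theorem isFredholm_prod_iff {K H E F : Type*} [Field K]
    [AddCommGroup H] [Module K H] [AddCommGroup E] [Module K E]
    [AddCommGroup F] [Module K F] (A : H →ₗ[K] E) (T : H →ₗ[K] F) :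
    IsFredholm K (A.prod T) ↔
      IsFredholm K (A.domRestrict (LinearMap.ker T)) ∧
        FiniteDimensional K (F ⧸ LinearMap.range T) :=
  isFredholm_prod_iff_general A T
end

section
/- Let f : V → W be a Fredholm linear map and let U be a subspace of V such that the restriction f|_U : U → W is also Fredholm. Then U has finite codimension in V, and dim(V/U) = ind f − ind(f|_U), as an identity of integers. -/
/-- The index of a (Fredholm) linear map: dim ker f − dim (W / im f), as an integer. -/
noncomputable def fredholmIndex (K : Type*) [Field K] {V W : Type*} [AddCommGroup V]
    [Module K V] [AddCommGroup W] [Module K W] (f : V →ₗ[K] W) : ℤ :=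
  (Module.finrank K (LinearMap.ker f) : ℤ) -
    (Module.finrank K (W ⧸ LinearMap.range f) : ℤ)

/-!
For a composite `f ∘ g` there is a six-term exact sequence
`0 → ker g → ker (f ∘ g) → ker f → coker g → coker (f ∘ g) → coker f → 0`.
Its part `ker f → coker g → coker (f ∘ g)` bounds `coker g`, and the vanishing of its alternating
sum of dimensions is the additivity of the index under composition. The restriction of `f` to `U`
is the composite of `f` with the inclusion of `U`, which has kernel `0` and cokernel `V / U`.
-/

section CompositionSequence

variable {R M N P : Type*} [Ring R] [AddCommGroup M] [Module R M] [AddCommGroup N] [Module R N]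
  [AddCommGroup P] [Module R P] (f : N →ₗ[R] P) (g : M →ₗ[R] N)

/-- The map `ker (f ∘ g) → ker f` induced by `g` in the kernel-cokernel sequence of `f ∘ g`. -/
def kerCompToKer : LinearMap.ker (f ∘ₗ g) →ₗ[R] LinearMap.ker f :=
  g.restrict fun _ hx ↦ hx

/-- The connecting map `ker f → coker g` of the kernel-cokernel sequence of `f ∘ g`; the cokernel
of a linear map is encoded as the quotient by its range. -/
def kerToCoker : LinearMap.ker f →ₗ[R] N ⧸ LinearMap.range g :=
  (LinearMap.range g).mkQ.domRestrict (LinearMap.ker f)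

/-- The map `coker g → coker (f ∘ g)` induced by `f` in the kernel-cokernel sequence of `f ∘ g`. -/
def cokerToCokerComp : N ⧸ LinearMap.range g →ₗ[R] P ⧸ LinearMap.range (f ∘ₗ g) :=
  Submodule.mapQ _ _ f <| LinearMap.range_comp g f ▸ Submodule.le_comap_map f _

lemma exact_inclusion_kerCompToKer :
    Function.Exact (Submodule.inclusion (LinearMap.ker_le_ker_comp g f)) (kerCompToKer f g) := by
  rw [LinearMap.exact_iff, Submodule.range_inclusion]
  exact LinearMap.ker_restrict _

lemma exact_kerCompToKer_kerToCoker :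
    Function.Exact (kerCompToKer f g) (kerToCoker f g) := by
  rintro ⟨y, hy⟩
  constructor
  · intro h
    obtain ⟨x, rfl⟩ := (Submodule.Quotient.mk_eq_zero _).1 h
    exact ⟨⟨x, hy⟩, rfl⟩
  · rintro ⟨x, hx⟩
    exact (Submodule.Quotient.mk_eq_zero _).2 ⟨x, congrArg Subtype.val hx⟩

lemma exact_kerToCoker_cokerToCokerComp :
    Function.Exact (kerToCoker f g) (cokerToCokerComp f g) := by
  rw [LinearMap.exact_iff, cokerToCokerComp, kerToCoker, Submodule.ker_mapQ,
    LinearMap.range_domRestrict, LinearMap.range_comp, Submodule.comap_map_eq, Submodule.map_sup,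
    Submodule.mkQ_map_self, bot_sup_eq]

lemma exact_cokerToCokerComp_factor :
    Function.Exact (cokerToCokerComp f g)
      (Submodule.factor (LinearMap.range_comp_le_range g f)) := by
  rw [LinearMap.exact_iff, cokerToCokerComp, Submodule.range_mapQ]
  exact Submodule.ker_mapQ _ _ _ _

lemma isNoetherian_ker_comp [IsNoetherian R (LinearMap.ker f)] [IsNoetherian R (LinearMap.ker g)] :
    IsNoetherian R (LinearMap.ker (f ∘ₗ g)) :=
  isNoetherian_of_range_eq_ker _ _ (exact_inclusion_kerCompToKer f g).linearMap_ker_eq.symm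

lemma isNoetherian_coker_right_of_comp [IsNoetherian R (LinearMap.ker f)]
    [IsNoetherian R (P ⧸ LinearMap.range (f ∘ₗ g))] : IsNoetherian R (N ⧸ LinearMap.range g) :=
  isNoetherian_of_range_eq_ker _ _ (exact_kerToCoker_cokerToCokerComp f g).linearMap_ker_eq.symm

end CompositionSequence

section Index

open Module

universe u

lemma finrank_range_add_finrank_range_of_exact {R M P : Type*} {N : Type u} [Ring R]
    [StrongRankCondition R] [HasRankNullity.{u} R] [AddCommGroup M] [Module R M] [AddCommGroup N]
    [Module R N] [AddCommGroup P] [Module R P] [Module.Finite R N] {f : M →ₗ[R] N}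
    {g : N →ₗ[R] P} (h : Function.Exact f g) :
    finrank R (LinearMap.range f) + finrank R (LinearMap.range g) = finrank R N := by
  rw [← h.linearMap_ker_eq, ← g.quotKerEquivRange.finrank_eq, add_comm,
    Submodule.finrank_quotient_add_finrank]

variable {K T V W : Type*} [DivisionRing K] [AddCommGroup T] [Module K T] [AddCommGroup V]
  [Module K V] [AddCommGroup W] [Module K W]

theorem finrank_ker_sub_finrank_coker_comp (f : V →ₗ[K] W) (g : T →ₗ[K] V)
    [FiniteDimensional K (LinearMap.ker f)] [FiniteDimensional K (LinearMap.ker g)]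
    [FiniteDimensional K (W ⧸ LinearMap.range (f ∘ₗ g))] :
    (finrank K (LinearMap.ker (f ∘ₗ g)) : ℤ) - finrank K (W ⧸ LinearMap.range (f ∘ₗ g)) =
      (finrank K (LinearMap.ker f) - finrank K (W ⧸ LinearMap.range f)) +
        (finrank K (LinearMap.ker g) - finrank K (V ⧸ LinearMap.range g)) := by
  have := isNoetherian_ker_comp f g
  have := isNoetherian_coker_right_of_comp f g
  have at_ker_comp := finrank_range_add_finrank_range_of_exact (exact_inclusion_kerCompToKer f g)
  have at_ker_f := finrank_range_add_finrank_range_of_exact (exact_kerCompToKer_kerToCoker f g)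
  have at_coker_g :=
    finrank_range_add_finrank_range_of_exact (exact_kerToCoker_cokerToCokerComp f g)
  have at_coker_comp := finrank_range_add_finrank_range_of_exact (exact_cokerToCokerComp_factor f g)
  rw [LinearMap.finrank_range_of_inj (Submodule.inclusion_injective _)] at at_ker_comp
  rw [LinearMap.range_eq_top.2 (Submodule.factor_surjective _), finrank_top] at at_coker_comp
  lia

theorem finiteCodim_of_fredholm_restrict_general (f : V →ₗ[K] W) (U : Submodule K V)
    [FiniteDimensional K (LinearMap.ker f)]
    [FiniteDimensional K (W ⧸ LinearMap.range (f.domRestrict U))] :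
    FiniteDimensional K (V ⧸ U) ∧
      (finrank K (V ⧸ U) : ℤ) =
        (finrank K (LinearMap.ker f) - finrank K (W ⧸ LinearMap.range f)) -
          (finrank K (LinearMap.ker (f.domRestrict U)) -
            finrank K (W ⧸ LinearMap.range (f.domRestrict U))) := by
  have restrict_eq_comp : f.domRestrict U = f ∘ₗ U.subtype := rfl
  have : FiniteDimensional K (W ⧸ LinearMap.range (f ∘ₗ U.subtype)) := restrict_eq_comp ▸ ‹_›
  have : FiniteDimensional K (LinearMap.ker U.subtype) := U.ker_subtype ▸ inferInstance
  have finite_coker := isNoetherian_coker_right_of_comp f U.subtype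
  have index_comp := finrank_ker_sub_finrank_coker_comp f U.subtype
  rw [U.range_subtype] at finite_coker
  rw [U.ker_subtype, U.range_subtype, finrank_bot] at index_comp
  rw [restrict_eq_comp]
  exact ⟨inferInstance, by lia⟩

end Index

/-- If f : V → W is Fredholm and its restriction to a subspace U is also
Fredholm, then U has finite codimension in V and dim(V/U) = ind f − ind (f|_U). -/
theorem finiteCodim_of_fredholm_restrict {K V W : Type*} [Field K]
    [AddCommGroup V] [Module K V] [AddCommGroup W] [Module K W]
    (f : V →ₗ[K] W) (U : Submodule K V)
    (hf : IsFredholm K f) (hfU : IsFredholm K (f.domRestrict U)) :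
    FiniteDimensional K (V ⧸ U) ∧
      (Module.finrank K (V ⧸ U) : ℤ) =
        fredholmIndex K f - fredholmIndex K (f.domRestrict U) := by
  have := hf.1
  have := hfU.2
  exact finiteCodim_of_fredholm_restrict_general f U
end

section
/- Let V be a vector space over K and let R : V → V be a linear map of the form R = U + N, where U : V → V is a bijective linear map and N : V → V is a linear map with finite-dimensional range. If R is injective, then R is bijective. -/
/-!
On the preimage of `range N` under `U`, both `U` and `U + N` take values in `range N`, the first
surjectively and the second injectively. As `range N` is Noetherian, `U` is injective there too, so
`(U + N) ∘ U⁻¹` is an injective endomorphism of the Artinian module `range N`, hence surjective.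
Thus the range of `U + N` contains `range N`, and therefore also that of `U = (U + N) - N`.
-/

section FiniteLengthPerturbation

variable {A M P : Type*} [Ring A] [AddCommGroup M] [Module A M] [AddCommGroup P] [Module A P]

theorem surjective_of_injective_of_surjective [IsNoetherian A P] [IsArtinian A P]
    {f g : M →ₗ[A] P} (hf : Function.Injective f) (hg : Function.Surjective g) :
    Function.Surjective f := by
  have hg_inj : Function.Injective g := IsNoetherian.injective_of_surjective_of_injective f g hf hg
  let e : M ≃ₗ[A] P := LinearEquiv.ofBijective g ⟨hg_inj, hg⟩
  have hfe : Function.Surjective (f ∘ₗ e.symm.toLinearMap) :=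
    IsArtinian.surjective_of_injective_endomorphism _ (hf.comp e.symm.injective)
  exact Function.Surjective.of_comp hfe

theorem surjective_add_of_range_le {U N : M →ₗ[A] P} (hU : Function.Surjective U)
    (hN : LinearMap.range N ≤ LinearMap.range (U + N)) : Function.Surjective (U + N) := by
  intro y
  obtain ⟨x, rfl⟩ := hU y
  have hUx : U x = (U + N) x - N x := by simp
  rw [← LinearMap.mem_range, hUx]
  exact sub_mem (LinearMap.mem_range_self (U + N) x) (hN (LinearMap.mem_range_self N x))

theorem range_le_range_add_of_surjective_of_injective {U N : M →ₗ[A] P}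
    [IsNoetherian A (LinearMap.range N)] [IsArtinian A (LinearMap.range N)]
    (hU : Function.Surjective U) (hinj : Function.Injective (U + N)) :
    LinearMap.range N ≤ LinearMap.range (U + N) := by
  let S : Submodule A M := (LinearMap.range N).comap U
  have hUS : ∀ x ∈ S, U x ∈ LinearMap.range N := fun _ hx => hx
  have hUNS : ∀ x ∈ S, (U + N) x ∈ LinearMap.range N := fun x hx =>
    add_mem hx (LinearMap.mem_range_self N x)
  have hU_surj : Function.Surjective (U.restrict hUS) := by
    rintro ⟨y, hy⟩
    obtain ⟨x, rfl⟩ := hU y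
    exact ⟨⟨x, hy⟩, rfl⟩
  have hUN_inj : Function.Injective ((U + N).restrict hUNS) := fun x y hxy =>
    Subtype.ext (hinj (congrArg Subtype.val hxy))
  intro y hy
  obtain ⟨x, hx⟩ := surjective_of_injective_of_surjective hUN_inj hU_surj ⟨y, hy⟩
  exact ⟨x, congrArg Subtype.val hx⟩

theorem bijective_of_injective_finiteRank_perturbation_general {U N : M →ₗ[A] P}
    [IsNoetherian A (LinearMap.range N)] [IsArtinian A (LinearMap.range N)]
    (hU : Function.Surjective U) (hinj : Function.Injective (U + N)) :
    Function.Bijective (U + N) :=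
  ⟨hinj, surjective_add_of_range_le hU <|
    range_le_range_add_of_surjective_of_injective hU hinj⟩

end FiniteLengthPerturbation

/-- If R = U + N with U bijective linear and N of finite-dimensional range,
and R is injective, then R is bijective. -/
theorem bijective_of_injective_finiteRank_perturbation {K V : Type*} [Field K]
    [AddCommGroup V] [Module K V] (R U N : V →ₗ[K] V)
    (hR : R = U + N) (hU : Function.Bijective U)
    (hN : FiniteDimensional K (LinearMap.range N))
    (hinj : Function.Injective R) :
    Function.Bijective R := by
  subst hR
  exact bijective_of_injective_finiteRank_perturbation_general hU.surjective hinj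
end
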